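/- Let z ∈ V^k be a nonuniform probability vector with positive components (z_1 > z_k > 0) and let n ≥ 4. Then the set A(z) = {y ∈ V^n : S(y) ⊊ T(y,z)} contains a nonempty subset that is open in V^n (with the subspace topology inherited from ℝ^n); in particular, z serves as a catalyst in producing uncountably many target states y ∈ V^n. -/

import Mathlib

noncomputable section

/-- `eSum x l` : the sum of the `l` largest components of `x`. -/
def eSum {n : ℕ} (x : Fin n → ℝ) (l : ℕ) : ℝ :=
  sSup {r | ∃ s : Finset (Fin n), s.card = l ∧ r = ∑ i ∈ s, x i}

/-- `ESum x l` : the sum of the `l` smallest components of `x`. -/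
def ESum {n : ℕ} (x : Fin n → ℝ) (l : ℕ) : ℝ :=
  sInf {r | ∃ s : Finset (Fin n), s.card = l ∧ r = ∑ i ∈ s, x i}

/-- Majorization `x ≺ y` (for vectors with equal total sum):
`e_l(x) ≤ e_l(y)` for all `1 ≤ l ≤ n`. -/
def Maj {n : ℕ} (x y : Fin n → ℝ) : Prop :=
  (∑ i, x i) = (∑ i, y i) ∧ ∀ l : ℕ, 1 ≤ l → l ≤ n → eSum x l ≤ eSum y l

/-- Strict majorization `x ◁ y`: equal total sums and `e_l(x) < e_l(y)` for all
`1 ≤ l ≤ n - 1`. -/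
def SMaj {n : ℕ} (x y : Fin n → ℝ) : Prop :=
  (∑ i, x i) = (∑ i, y i) ∧ ∀ l : ℕ, 1 ≤ l → l + 1 ≤ n → eSum x l < eSum y l

/-- Super-majorization `x ≺ʷ y` : `E_l(x) ≥ E_l(y)` for all `1 ≤ l ≤ n`. -/
def SupMaj {n : ℕ} (x y : Fin n → ℝ) : Prop :=
  ∀ l : ℕ, 1 ≤ l → l ≤ n → ESum y l ≤ ESum x l

/-- Strict super-majorization `x ◁ʷ y` : `E_l(x) > E_l(y)` for all `1 ≤ l ≤ n`. -/
def SSupMaj {n : ℕ} (x y : Fin n → ℝ) : Prop :=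
  ∀ l : ℕ, 1 ≤ l → l ≤ n → ESum y l < ESum x l

/-- Tensor product of two vectors: the vector of all pairwise products. -/
def tensor {m k : ℕ} (x : Fin m → ℝ) (c : Fin k → ℝ) : Fin (m * k) → ℝ :=
  fun i => x (finProdFinEquiv.symm i).1 * c (finProdFinEquiv.symm i).2

/-- `k`-fold tensor power of a vector. -/
def tpow {n : ℕ} (x : Fin n → ℝ) (k : ℕ) : Fin (n ^ k) → ℝ :=
  fun i => ∏ j : Fin k, x (finFunctionFinEquiv.symm i j)

/-- `V^n` : probability vectors with components in non-increasing order. -/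
def Vn (n : ℕ) : Set (Fin n → ℝ) :=
  {x | (∀ i, 0 ≤ x i) ∧ (∑ i, x i) = 1 ∧ Antitone x}

/-- `S(y)` : members of `V^n` majorized by `y`. -/
def Sset {n : ℕ} (y : Fin n → ℝ) : Set (Fin n → ℝ) :=
  {x ∈ Vn n | Maj x y}

/-- `T(y,c)` : members of `V^n` with `x ⊗ c ≺ y ⊗ c`. -/
def Tcat {n k : ℕ} (y : Fin n → ℝ) (c : Fin k → ℝ) : Set (Fin n → ℝ) :=
  {x ∈ Vn n | Maj (tensor x c) (tensor y c)}

/-- Local uniformity `l_u(c)` : the minimum of the consecutive ratios `c_{i+1}/c_i`. -/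
def lu {k : ℕ} (c : Fin k → ℝ) : ℝ :=
  sInf {r | ∃ i : ℕ, ∃ h : i + 1 < k, r = c ⟨i + 1, h⟩ / c ⟨i, Nat.lt_of_succ_lt h⟩}

/-- Global uniformity `g_u(c) = c_k / c_1` (smallest over largest component of a
non-increasingly ordered vector). -/
def gu {k : ℕ} (c : Fin k → ℝ) : ℝ :=
  if h : 0 < k then c ⟨k - 1, Nat.sub_lt h Nat.one_pos⟩ / c ⟨0, h⟩ else 1

/-- Largest component. -/
def maxc {n : ℕ} (x : Fin n → ℝ) : ℝ := sSup (Set.range x)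

/-- Smallest component. -/
def minc {n : ℕ} (x : Fin n → ℝ) : ℝ := sInf (Set.range x)

/-- `c'` is a (contiguous) segment of `c`. -/
def IsSegment {j k : ℕ} (c' : Fin j → ℝ) (c : Fin k → ℝ) : Prop :=
  ∃ (i : ℕ) (_h : i + j ≤ k), ∀ t : Fin j, c' t = c ⟨i + t, by have := t.isLt; omega⟩

/-- The first `d` components of a vector. -/
def take {n : ℕ} (x : Fin n → ℝ) (d : ℕ) (h : d ≤ n) : Fin d → ℝ :=
  fun i => x ⟨i, Nat.lt_of_lt_of_le i.isLt h⟩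

/-- The components of a vector after the first `d` ones. -/
def drop {n : ℕ} (x : Fin n → ℝ) (d : ℕ) : Fin (n - d) → ℝ :=
  fun i => x ⟨d + i, by have := i.isLt; omega⟩

/-- The segment `(c_i, …, c_j)` of `c` (`0`-based indices). -/
def seg {k : ℕ} (c : Fin k → ℝ) (i j : ℕ) (hij : i ≤ j) (hj : j < k) :
    Fin (j - i + 1) → ℝ :=
  fun t => c ⟨i + t, by have := t.isLt; omega⟩

/-- `(c_i, …, c_j)` is a block of the decomposition `[c]_α` of the (positive,
non-increasingly ordered) vector `c` according to `α`: ratios within the block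
exceed `α`, and the ratios at the two boundaries of the block are `≤ α`
(or the block touches an end of `c`). -/
def IsBlock {k : ℕ} (α : ℝ) (c : Fin k → ℝ) (i j : ℕ) : Prop :=
  ∃ (hij : i ≤ j) (hj : j < k),
    (i = 0 ∨ c ⟨i, by omega⟩ / c ⟨i - 1, by omega⟩ ≤ α) ∧
    (j = k - 1 ∨ ∃ hj1 : j + 1 < k, c ⟨j + 1, hj1⟩ / c ⟨j, hj⟩ ≤ α) ∧
    (∀ (t : ℕ) (ht1 : i ≤ t) (ht2 : t < j), α < c ⟨t + 1, by omega⟩ / c ⟨t, by omega⟩)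

/-- `T_k(y)` : states transformable to `y` with a `k`-dimensional catalyst. -/
def Tk {n : ℕ} (k : ℕ) (y : Fin n → ℝ) : Set (Fin n → ℝ) :=
  {x ∈ Vn n | ∃ c : Fin k → ℝ, (∀ i, 0 < c i) ∧ (∑ i, c i) = 1 ∧ Antitone c ∧
    Maj (tensor x c) (tensor y c)}

/-- `M_k(y)` : states `x` with `x^{⊗k} ≺ y^{⊗k}`. -/
def Mk {n : ℕ} (k : ℕ) (y : Fin n → ℝ) : Set (Fin n → ℝ) :=
  {x ∈ Vn n | Maj (tpow x k) (tpow y k)}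

/-- `T(y)` : states transformable to `y` with some catalyst. -/
def Tinf {n : ℕ} (y : Fin n → ℝ) : Set (Fin n → ℝ) :=
  {x ∈ Vn n | ∃ (k : ℕ) (c : Fin k → ℝ), 0 < k ∧ (∀ i, 0 < c i) ∧ (∑ i, c i) = 1 ∧
    Antitone c ∧ Maj (tensor x c) (tensor y c)}

/-- `M(y)` : states `x` with `x^{⊗k} ≺ y^{⊗k}` for some `k ≥ 1`. -/
def Minf {n : ℕ} (y : Fin n → ℝ) : Set (Fin n → ℝ) :=
  {x ∈ Vn n | ∃ k : ℕ, 1 ≤ k ∧ Maj (tpow x k) (tpow y k)}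

/-- `S^λ(y)` : states `x` with `x ≺ʷ λ y`. -/
def Slam {n : ℕ} (lam : ℝ) (y : Fin n → ℝ) : Set (Fin n → ℝ) :=
  {x ∈ Vn n | SupMaj x (fun i => lam * y i)}

/-- `T^λ(y,c)` : states `x` with `x ⊗ c ≺ʷ λ (y ⊗ c)`. -/
def Tlamc {n k : ℕ} (lam : ℝ) (y : Fin n → ℝ) (c : Fin k → ℝ) : Set (Fin n → ℝ) :=
  {x ∈ Vn n | SupMaj (tensor x c) (fun i => lam * tensor y c i)}

/-- `T_k^λ(y)`. -/
def Tklam {n : ℕ} (k : ℕ) (lam : ℝ) (y : Fin n → ℝ) : Set (Fin n → ℝ) :=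
  {x ∈ Vn n | ∃ c : Fin k → ℝ, (∀ i, 0 < c i) ∧ (∑ i, c i) = 1 ∧ Antitone c ∧
    SupMaj (tensor x c) (fun i => lam * tensor y c i)}

/-- `M_k^λ(y)`. -/
def Mklam {n : ℕ} (k : ℕ) (lam : ℝ) (y : Fin n → ℝ) : Set (Fin n → ℝ) :=
  {x ∈ Vn n | SupMaj (tpow x k) (fun i => lam ^ k * tpow y k i)}

/-- `T^λ(y)`. -/
def Tlaminf {n : ℕ} (lam : ℝ) (y : Fin n → ℝ) : Set (Fin n → ℝ) :=
  {x ∈ Vn n | ∃ (k : ℕ) (c : Fin k → ℝ), 0 < k ∧ (∀ i, 0 < c i) ∧ (∑ i, c i) = 1 ∧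
    Antitone c ∧ SupMaj (tensor x c) (fun i => lam * tensor y c i)}

/-- `M^λ(y)`. -/
def Mlaminf {n : ℕ} (lam : ℝ) (y : Fin n → ℝ) : Set (Fin n → ℝ) :=
  {x ∈ Vn n | ∃ k : ℕ, 1 ≤ k ∧ SupMaj (tpow x k) (fun i => lam ^ k * tpow y k i)}

/-- `K_d(y)` : concatenations `x = x' ⊕ x''` with `x' ◁ y'` and `x'' ◁ y''`,
where `y'` is the first-`d` part of `y` and `y''` the rest. -/
def Kd {n : ℕ} (y : Fin n → ℝ) (d : ℕ) (h : d ≤ n) : Set (Fin n → ℝ) :=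
  {x ∈ Vn n | SMaj (take x d h) (take y d h) ∧ SMaj (drop x d) (drop y d)}

/-- `y(d)` : first `d` components equal to `e_d(y)/d`, the last `n-d` equal to
`(1 - e_d(y))/(n-d)`. -/
def yvec {n : ℕ} (y : Fin n → ℝ) (d : ℕ) : Fin n → ℝ :=
  fun i => if (i : ℕ) < d then eSum y d / d else (1 - eSum y d) / (n - d)

/-- `K_d^λ(y)` : states `x ∈ S^λ(y)` with `E_l(x) = λ E_l(y)` iff `l = n - d`. -/
def Kdlam {n : ℕ} (lam : ℝ) (y : Fin n → ℝ) (d : ℕ) : Set (Fin n → ℝ) :=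
  {x ∈ Vn n | SupMaj x (fun i => lam * y i) ∧
    ∀ l : ℕ, 1 ≤ l → l ≤ n → (ESum x l = lam * ESum y l ↔ l = n - d)}

/-!
`e_l(x ⊗ z)` is the maximum of `∑ j, z_j e_{L_j}(x)` over all `L` with `∑ j, L_j = l`. Averaging the
first `d` and the last `n - d` entries of `y` gives the vector `y(d)`, and `e_m(y(d)) < e_m(y)`
unless `m` is `0`, `d` or `n`. So `e_l(y(d) ⊗ z) = e_l(y ⊗ z)` requires an optimal `L` for `y` with
values in `{0, d, n}`. On an explicit open set of `y`, given by comparing ratios of entries of `y`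
with ratios of entries of `z`, no such `L` is optimal, since exchanging a product it selects for one
it omits increases the sum. Hence `y(d) ⊗ z` is strictly majorized by `y ⊗ z` and `y(d)` has a
neighbourhood in `V^n` contained in `T(y, z)`. This neighbourhood leaves `S(y)`, because
`e_d(y(d)) = e_d(y)`.
-/

open Finset Filter Topology

section FiniteSums

variable {ι κ : Type*}

theorem sum_le_sum_of_threshold {M : Type*} [AddCommMonoid M] [PartialOrder M]
    [IsOrderedAddMonoid M] {f : ι → M} {s t : Finset ι} {c : M} (hcard : #s = #t)
    (ht : ∀ i ∈ t, c ≤ f i) (hs : ∀ i ∈ s, i ∉ t → f i ≤ c) :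
    ∑ i ∈ s, f i ≤ ∑ i ∈ t, f i := by
  classical
  calc ∑ i ∈ s, f i = ∑ i ∈ s ∩ t, f i + ∑ i ∈ s \ t, f i := (sum_inter_add_sum_sdiff s t f).symm
    _ ≤ ∑ i ∈ s ∩ t, f i + #(s \ t) • c := by
      gcongr
      exact sum_le_card_nsmul _ _ _ fun i hi =>
        hs i (mem_sdiff.1 hi).1 (mem_sdiff.1 hi).2
    _ = ∑ i ∈ t ∩ s, f i + #(t \ s) • c := by rw [inter_comm, card_sdiff_comm hcard]
    _ ≤ ∑ i ∈ t ∩ s, f i + ∑ i ∈ t \ s, f i := by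
      gcongr
      exact card_nsmul_le_sum _ _ _ fun i hi => ht i (mem_sdiff.1 hi).1
    _ = ∑ i ∈ t, f i := sum_inter_add_sum_sdiff t s f

theorem card_mul_sum_lt_card_mul_sum {R : Type*} [Semiring R] [PartialOrder R]
    [IsOrderedCancelAddMonoid R] {f : ι → R} {s t : Finset ι}
    (hle : ∀ i ∈ s, ∀ j ∈ t, f j ≤ f i) (hlt : ∃ i ∈ s, ∃ j ∈ t, f j < f i) :
    #s * ∑ j ∈ t, f j < #t * ∑ i ∈ s, f i := by
  obtain ⟨i, hi, j, hj, hij⟩ := hlt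
  calc #s * ∑ j ∈ t, f j = ∑ _i ∈ s, ∑ j ∈ t, f j := by rw [sum_const, nsmul_eq_mul]
    _ < ∑ i ∈ s, ∑ _j ∈ t, f i :=
      sum_lt_sum (fun i hi => sum_le_sum (hle i hi))
        ⟨i, hi, sum_lt_sum (hle i hi) ⟨j, hj, hij⟩⟩
    _ = #t * ∑ i ∈ s, f i := by simp only [sum_const, nsmul_eq_mul, mul_sum]

theorem sum_filter_fst_mem {M : Type*} [AddCommMonoid M] [Fintype ι] [Fintype κ] [DecidableEq ι]
    (s : κ → Finset ι) (f : ι × κ → M) :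
    ∑ p with p.1 ∈ s p.2, f p = ∑ j, ∑ i ∈ s j, f (i, j) := by
  rw [sum_filter, Fintype.sum_prod_type_right]
  simp only [sum_ite_mem, univ_inter]

theorem card_filter_le_and_lt {n a b : ℕ} (hb : b ≤ n) :
    #{i : Fin n | a ≤ (i : ℕ) ∧ (i : ℕ) < b} = b - a := by
  rw [← Nat.card_Ico, ← card_attachFin (Ico a b) fun i hi => (mem_Ico.1 hi).2.trans_le hb]
  congr 1
  ext i
  simp only [mem_filter_univ, mem_attachFin, mem_Ico]

end FiniteSums

section Segments

variable {E : Type*} [AddCommGroup E] [Module ℝ E] [TopologicalSpace E] [IsTopologicalAddGroup E]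
  [ContinuousSMul ℝ E] {s : Set E}

theorem tendsto_lineMap_nhdsGT_zero (hs : Convex ℝ s) {x p : E} (hx : x ∈ s) (hp : p ∈ s) :
    Tendsto (AffineMap.lineMap x p : ℝ → E) (𝓝[>] 0) (𝓝[s] x) := by
  refine tendsto_nhdsWithin_iff.2 ⟨?_, ?_⟩
  · have h := (AffineMap.lineMap_continuous (p := x) (q := p) (R := ℝ)).tendsto 0
    rw [AffineMap.lineMap_apply_zero] at h
    exact h.mono_left nhdsWithin_le_nhds
  · filter_upwards [Ioo_mem_nhdsGT zero_lt_one] with t ht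
    exact hs.lineMap_mem hx hp (Set.Ioo_subset_Icc_self ht)

theorem not_countable_inter_of_convex (hs : Convex ℝ s) (hnt : s.Nontrivial) {U : Set E}
    (hU : IsOpen U) (hne : (s ∩ U).Nonempty) : ¬ (s ∩ U).Countable := by
  intro hcount
  obtain ⟨x, hxs, hxU⟩ := hne
  obtain ⟨p, hp, hpx⟩ := hnt.exists_ne x
  have hmem : ∀ᶠ t in 𝓝[>] (0 : ℝ), AffineMap.lineMap x p t ∈ s ∩ U :=
    (tendsto_lineMap_nhdsGT_zero hs hxs hp).eventually
      (inter_mem self_mem_nhdsWithin (mem_nhdsWithin_of_mem_nhds (hU.mem_nhds hxU)))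
  obtain ⟨ε, hε, hsub⟩ := mem_nhdsGT_iff_exists_Ioo_subset.1 hmem
  have hIoo : (Set.Ioo 0 ε).Countable :=
    Set.MapsTo.countable_of_injOn (f := (AffineMap.lineMap x p : ℝ → E)) (t := s ∩ U) hsub
      (AffineMap.lineMap_injective ℝ hpx.symm).injOn hcount
  exact (Cardinal.Real.Ioo_countable_iff.1 hIoo).not_gt hε

end Segments

section LargestSums

variable {n : ℕ} {x y : Fin n → ℝ}

theorem finite_setOf_eq_sum_card_eq (x : Fin n → ℝ) (l : ℕ) :
    {r | ∃ s : Finset (Fin n), #s = l ∧ r = ∑ i ∈ s, x i}.Finite := by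
  refine (Set.finite_range fun s : Finset (Fin n) => ∑ i ∈ s, x i).subset ?_
  rintro r ⟨s, -, rfl⟩
  exact ⟨s, rfl⟩

theorem sum_le_eSum (x : Fin n → ℝ) (s : Finset (Fin n)) : ∑ i ∈ s, x i ≤ eSum x #s :=
  le_csSup (finite_setOf_eq_sum_card_eq x #s).bddAbove ⟨s, rfl, rfl⟩

theorem exists_eSum_eq_sum (x : Fin n → ℝ) {l : ℕ} (hl : l ≤ n) :
    ∃ s : Finset (Fin n), #s = l ∧ eSum x l = ∑ i ∈ s, x i := by
  obtain ⟨s, -, hs⟩ := exists_subset_card_eq (s := (univ : Finset (Fin n))) (n := l) (by simpa)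
  refine Set.Nonempty.csSup_mem ?_ (finite_setOf_eq_sum_card_eq x l)
  exact ⟨_, s, hs, rfl⟩

@[simp]
theorem eSum_zero (x : Fin n → ℝ) : eSum x 0 = 0 := by
  obtain ⟨s, hs, he⟩ := exists_eSum_eq_sum x n.zero_le
  rw [he, card_eq_zero.1 hs, sum_empty]

@[simp]
theorem eSum_self (x : Fin n → ℝ) : eSum x n = ∑ i, x i := by
  obtain ⟨s, hs, he⟩ := exists_eSum_eq_sum x le_rfl
  rw [he, (card_eq_iff_eq_univ s).1 (by rw [hs, Fintype.card_fin])]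

theorem sum_filter_lt_le_eSum (x : Fin n → ℝ) {m : ℕ} (hm : m ≤ n) :
    ∑ i with Fin.val i < m, x i ≤ eSum x m := by
  have hcard : #{i : Fin n | (i : ℕ) < m} = m := by rw [Fin.card_filter_val_lt, min_eq_right hm]
  simpa only [hcard] using sum_le_eSum x {i | (i : ℕ) < m}

theorem sum_lt_eSum_of_swap {s : Finset (Fin n)} {p q : Fin n} (hp : p ∈ s) (hq : q ∉ s)
    (hpq : x p < x q) : ∑ i ∈ s, x i < eSum x #s := by
  have hq' : q ∉ s.erase p := fun h => hq (mem_of_mem_erase h)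
  have hcard : #(insert q (s.erase p)) = #s := by
    rw [card_insert_of_notMem hq', card_erase_add_one hp]
  calc ∑ i ∈ s, x i = x p + ∑ i ∈ s.erase p, x i := (add_sum_erase s x hp).symm
    _ < x q + ∑ i ∈ s.erase p, x i := by gcongr
    _ = ∑ i ∈ insert q (s.erase p), x i := (sum_insert hq').symm
    _ ≤ eSum x #s := hcard ▸ sum_le_eSum x _

theorem continuous_eSum {l : ℕ} (hl : l ≤ n) : Continuous fun x : Fin n → ℝ => eSum x l := by
  have hne : (powersetCard l (univ : Finset (Fin n))).Nonempty :=
    powersetCard_nonempty.2 (by simpa)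
  have hsup (x : Fin n → ℝ) :
      eSum x l = (powersetCard l univ).sup' hne fun s => ∑ i ∈ s, x i := by
    refine le_antisymm ?_ (sup'_le _ _ fun s hs => ?_)
    · obtain ⟨s, hs, he⟩ := exists_eSum_eq_sum x hl
      exact he ▸ le_sup' (fun s => ∑ i ∈ s, x i) (mem_powersetCard_univ.2 hs)
    · exact mem_powersetCard_univ.1 hs ▸ sum_le_eSum x s
  simp only [hsup]
  exact Continuous.finset_sup'_apply hne fun s _ => by fun_prop

theorem SMaj.maj (h : SMaj x y) : Maj x y := by
  refine ⟨h.1, fun l hl1 hln => ?_⟩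
  rcases hln.lt_or_eq with hlt | rfl
  · exact (h.2 l hl1 hlt).le
  · simpa only [eSum_self] using h.1.le

theorem SMaj.eventually_nhds (h : SMaj x y) :
    ∀ᶠ x' in 𝓝 x, ∑ i, x' i = ∑ i, x i → SMaj x' y := by
  have hlt : ∀ᶠ x' in 𝓝 x, ∀ l ∈ Ico 1 n, eSum x' l < eSum y l := by
    refine (eventually_all_finset _).2 fun l hl => ?_
    obtain ⟨hl1, hln⟩ := mem_Ico.1 hl
    exact (continuous_eSum hln.le).continuousAt.eventually_lt_const (h.2 l hl1 hln)
  filter_upwards [hlt] with x' hx' hsum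
  exact ⟨hsum.trans h.1, fun l hl1 hln => hx' l (mem_Ico.2 ⟨hl1, hln⟩)⟩

theorem eSum_eq_sum_filter_lt (hx : Antitone x) {m : ℕ} (hm : m ≤ n) :
    eSum x m = ∑ i with Fin.val i < m, x i := by
  refine le_antisymm ?_ (sum_filter_lt_le_eSum x hm)
  obtain rfl | hpos := m.eq_zero_or_pos
  · simp
  obtain ⟨s, hs, he⟩ := exists_eSum_eq_sum x hm
  rw [he]
  refine sum_le_sum_of_threshold (c := x ⟨m - 1, by lia⟩) ?_ ?_ ?_
  · rw [hs, Fin.card_filter_val_lt, min_eq_right hm]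
  · intro i hi
    rw [mem_filter_univ] at hi
    exact hx (Fin.le_def.2 (Nat.le_sub_one_of_lt hi))
  · intro i _ hi
    rw [mem_filter_univ, not_lt] at hi
    exact hx (Fin.le_def.2 ((Nat.sub_le m 1).trans hi))

theorem eSum_add_sum_filter (hx : Antitone x) {a b : ℕ} (hab : a ≤ b) (hb : b ≤ n) :
    eSum x a + ∑ i with a ≤ Fin.val i ∧ Fin.val i < b, x i = eSum x b := by
  rw [eSum_eq_sum_filter_lt hx (hab.trans hb), eSum_eq_sum_filter_lt hx hb,
    ← sum_union (disjoint_filter.2 fun i _ _ _ => by lia), ← filter_or]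
  congr 1
  ext i
  simp only [mem_filter_univ]
  lia

theorem eSum_add_mul_const (hx : Antitone x) {a b : ℕ} (hab : a ≤ b) (hb : b ≤ n) {c : ℝ}
    (hc : ∀ i : Fin n, a ≤ i → i < b → x i = c) : eSum x a + (b - a) * c = eSum x b := by
  rw [← eSum_add_sum_filter hx hab hb,
    sum_congr rfl fun i hi => hc i (mem_filter_univ i |>.1 hi).1 (mem_filter_univ i |>.1 hi).2,
    sum_const, card_filter_le_and_lt hb, nsmul_eq_mul, Nat.cast_sub hab]

/- On the block `[i, j]` the partial sums of `x` are the chord of those of `y`, which form a concave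
sequence that is not affine there. -/
theorem eSum_lt_eSum_of_const_block (hx : Antitone x) (hy : Antitone y) {i j : Fin n} {m : ℕ}
    (him : i < m) (hmj : m ≤ j) {c : ℝ} (hc : ∀ l, i ≤ l → l ≤ j → x l = c)
    (hi : eSum x i = eSum y i) (hj : eSum x (j + 1) = eSum y (j + 1)) (hij : y j < y i) :
    eSum x m < eSum y m := by
  have hxm : eSum x i + (m - i) * c = eSum x m :=
    eSum_add_mul_const hx him.le (by lia) fun l hil hlm => hc l hil (by lia)
  have hxj : eSum x i + ((j + 1 : ℕ) - i) * c = eSum x (j + 1) :=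
    eSum_add_mul_const hx (by lia) (by lia) fun l hil hlj => hc l hil (by lia)
  have hym := eSum_add_sum_filter hy him.le (b := m) (by lia)
  have hyj := eSum_add_sum_filter hy (a := m) (b := j + 1) (by lia) (by lia)
  have hcross := card_mul_sum_lt_card_mul_sum (f := y)
    (s := {l | (i : ℕ) ≤ l ∧ (l : ℕ) < m}) (t := {l | m ≤ (l : ℕ) ∧ (l : ℕ) < j + 1})
    (fun l hl l' hl' => by
      rw [mem_filter_univ] at hl hl'
      exact hy (Fin.le_def.2 (by lia)))
    ⟨i, by simpa, j, by simpa, hij⟩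
  rw [card_filter_le_and_lt (by lia), card_filter_le_and_lt (by lia), Nat.cast_sub him.le,
    Nat.cast_sub (by lia)] at hcross
  have hlen : (0 : ℝ) < (j + 1 : ℕ) - i := sub_pos.2 (by exact_mod_cast (by lia : (i : ℕ) < j + 1))
  refine lt_of_mul_lt_mul_left ?_ hlen.le
  rw [← hxm, ← hym, hi]
  have hchord : ((j + 1 : ℕ) - i) * c = ∑ l with i ≤ Fin.val l ∧ Fin.val l < m, y l +
      ∑ l with m ≤ Fin.val l ∧ Fin.val l < j + 1, y l := by linarith
  linear_combination ((m : ℝ) - i) * hchord + hcross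

end LargestSums

section TensorProducts

variable {n k : ℕ} {x y : Fin n → ℝ} {c : Fin k → ℝ}

theorem sum_tensor (x : Fin n → ℝ) (c : Fin k → ℝ) :
    ∑ i, tensor x c i = (∑ i, x i) * ∑ j, c j := by
  rw [sum_mul_sum, ← Fintype.sum_prod_type']
  exact Equiv.sum_comp finProdFinEquiv.symm (fun p : Fin n × Fin k => x p.1 * c p.2)

theorem continuous_tensor_left (c : Fin k → ℝ) :
    Continuous fun x : Fin n → ℝ => tensor x c := by
  unfold tensor
  fun_prop

theorem sum_map_tensor (x : Fin n → ℝ) (c : Fin k → ℝ) (s : Finset (Fin n × Fin k)) :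
    ∑ i ∈ s.map finProdFinEquiv.toEmbedding, tensor x c i = ∑ p ∈ s, x p.1 * c p.2 := by
  simp only [sum_map, Equiv.coe_toEmbedding, tensor, Equiv.symm_apply_apply]

theorem card_map_filter_fst_mem (s : Fin k → Finset (Fin n)) :
    #((univ.filter fun p : Fin n × Fin k => p.1 ∈ s p.2).map finProdFinEquiv.toEmbedding) =
      ∑ j, #(s j) := by
  rw [card_map, card_eq_sum_ones, sum_filter_fst_mem]
  simp only [card_eq_sum_ones]

theorem sum_map_filter_fst_mem_tensor (x : Fin n → ℝ) (c : Fin k → ℝ)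
    (s : Fin k → Finset (Fin n)) :
    ∑ i ∈ (univ.filter fun p : Fin n × Fin k => p.1 ∈ s p.2).map finProdFinEquiv.toEmbedding,
      tensor x c i = ∑ j, c j * ∑ i ∈ s j, x i := by
  rw [sum_map_tensor, sum_filter_fst_mem]
  exact sum_congr rfl fun j _ => by rw [mul_sum, sum_congr rfl fun i _ => mul_comm _ _]

theorem exists_eSum_tensor_le (x : Fin n → ℝ) (hc : ∀ j, 0 ≤ c j) {l : ℕ} (hl : l ≤ n * k) :
    ∃ L : Fin k → ℕ, (∀ j, L j ≤ n) ∧ ∑ j, L j = l ∧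
      eSum (tensor x c) l ≤ ∑ j, c j * eSum x (L j) := by
  obtain ⟨s, hs, he⟩ := exists_eSum_eq_sum (tensor x c) hl
  let t (j : Fin k) : Finset (Fin n) := {i | finProdFinEquiv (i, j) ∈ s}
  have hst : (univ.filter fun p : Fin n × Fin k => p.1 ∈ t p.2).map finProdFinEquiv.toEmbedding
      = s := by
    ext i
    simp only [t, mem_map_equiv, mem_filter_univ, Prod.mk.eta, Equiv.apply_symm_apply]
  refine ⟨fun j => #(t j), fun j => card_finset_fin_le _, ?_, ?_⟩
  · rw [← card_map_filter_fst_mem, hst, hs]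
  · rw [he, ← hst, sum_map_filter_fst_mem_tensor]
    exact sum_le_sum fun j _ => mul_le_mul_of_nonneg_left (sum_le_eSum x (t j)) (hc j)

theorem sum_mul_eSum_le_eSum_tensor (x : Fin n → ℝ) (c : Fin k → ℝ) {L : Fin k → ℕ}
    (hL : ∀ j, L j ≤ n) : ∑ j, c j * eSum x (L j) ≤ eSum (tensor x c) (∑ j, L j) := by
  choose s hs he using fun j => exists_eSum_eq_sum x (hL j)
  have h := sum_le_eSum (tensor x c)
    ((univ.filter fun p : Fin n × Fin k => p.1 ∈ s p.2).map finProdFinEquiv.toEmbedding)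
  rw [sum_map_filter_fst_mem_tensor, card_map_filter_fst_mem] at h
  simpa only [hs, he] using h

theorem sum_mul_eSum_lt_eSum_tensor (hy : Antitone y) {L : Fin k → ℕ} (hL : ∀ j, L j ≤ n)
    {i i' : Fin n} {j j' : Fin k} (hi : i < L j) (hi' : L j' ≤ i')
    (hlt : y i * c j < y i' * c j') :
    ∑ j, c j * eSum y (L j) < eSum (tensor y c) (∑ j, L j) := by
  let s (j : Fin k) : Finset (Fin n) := {i | (i : ℕ) < L j}
  have hs (j : Fin k) : #(s j) = L j := by rw [Fin.card_filter_val_lt, min_eq_right (hL j)]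
  have h := sum_lt_eSum_of_swap (x := tensor y c)
    (s := (univ.filter fun p : Fin n × Fin k => p.1 ∈ s p.2).map finProdFinEquiv.toEmbedding)
    (p := finProdFinEquiv (i, j)) (q := finProdFinEquiv (i', j'))
    (by simpa [s, mem_map_equiv]) (by simpa [s, mem_map_equiv]) (by simpa [tensor])
  rw [sum_map_filter_fst_mem_tensor, card_map_filter_fst_mem] at h
  simpa only [hs, s, eSum_eq_sum_filter_lt hy (hL _)] using h

theorem Maj.tensor_right (h : Maj x y) (hc : ∀ j, 0 ≤ c j) :
    Maj (tensor x c) (tensor y c) := by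
  refine ⟨by rw [sum_tensor, sum_tensor, h.1], fun l _ hl => ?_⟩
  obtain ⟨L, hLn, rfl, hle⟩ := exists_eSum_tensor_le x hc hl
  refine hle.trans (le_trans ?_ (sum_mul_eSum_le_eSum_tensor y c hLn))
  refine sum_le_sum fun j _ => mul_le_mul_of_nonneg_left ?_ (hc j)
  obtain h0 | hpos := (L j).eq_zero_or_pos
  · simp only [h0, eSum_zero, le_refl]
  · exact h.2 _ hpos (hLn j)

end TensorProducts

section SplitRegion

variable {n k : ℕ} {z : Fin k → ℝ} {p : Fin n} {x y : Fin (n + 1) → ℝ}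

/-- For positive `z` and `d = p + 1`, the vectors `y` whose parts `y' = (y_1, …, y_d)` and
`y'' = (y_{d+1}, …, y_{n+1})` satisfy `g_u(y') < g_u(z)`, `g_u(y'') < g_u(z)` and
`g_u(z) < y_{d+1} / y_d`, which makes `z` a catalyst for some transformation to `y`. The conditions
are cross-multiplied so that they are open and do not require `z` to be ordered. -/
def splitRegion (z : Fin k → ℝ) (p : Fin n) : Set (Fin (n + 1) → ℝ) :=
  {y | (∀ i j, y p.castSucc * z i < y 0 * z j) ∧
    (∀ i j, y (Fin.last n) * z i < y p.succ * z j) ∧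
    ∃ i j, y p.castSucc * z i < y p.succ * z j}

theorem isOpen_splitRegion (z : Fin k → ℝ) (p : Fin n) : IsOpen (splitRegion z p) := by
  simp only [splitRegion, Set.ofPred_and, Set.ofPred_forall, Set.ofPred_exists]
  refine IsOpen.inter ?_ (IsOpen.inter ?_ ?_)
  · exact isOpen_iInter_of_finite fun i => isOpen_iInter_of_finite fun j =>
      isOpen_lt (by fun_prop) (by fun_prop)
  · exact isOpen_iInter_of_finite fun i => isOpen_iInter_of_finite fun j =>
      isOpen_lt (by fun_prop) (by fun_prop)
  · exact isOpen_iUnion fun i => isOpen_iUnion fun j => isOpen_lt (by fun_prop) (by fun_prop)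

theorem smul_mem_splitRegion (hy : y ∈ splitRegion z p) {t : ℝ} (ht : 0 < t) :
    t • y ∈ splitRegion z p := by
  simp only [splitRegion, Set.mem_ofPred_eq, Pi.smul_apply, smul_eq_mul, mul_assoc,
    mul_lt_mul_iff_right₀ ht]
  exact hy

theorem apply_castSucc_lt_apply_zero (hz : ∀ j, 0 < z j) (hy : y ∈ splitRegion z p) :
    y p.castSucc < y 0 := by
  obtain ⟨htop, -, i, -⟩ := hy
  exact lt_of_mul_lt_mul_right (htop i i) (hz i).le

theorem apply_last_lt_apply_succ (hz : ∀ j, 0 < z j) (hy : y ∈ splitRegion z p) :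
    y (Fin.last n) < y p.succ := by
  obtain ⟨-, hbot, i, -⟩ := hy
  exact lt_of_mul_lt_mul_right (hbot i i) (hz i).le

theorem sum_mul_eSum_lt_eSum_tensor_of_mem_splitRegion (hy : Antitone y)
    (hyz : y ∈ splitRegion z p) {L : Fin k → ℕ}
    (hL : ∀ j, L j = 0 ∨ L j = p + 1 ∨ L j = n + 1) (hpos : ∃ j, L j ≠ 0)
    (hfull : ∃ j, L j ≠ n + 1) :
    ∑ j, z j * eSum y (L j) < eSum (tensor y z) (∑ j, L j) := by
  obtain ⟨htop, hbot, i₀, j₀, hmid⟩ := hyz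
  have hLn (j : Fin k) : L j ≤ n + 1 := by have := hL j; lia
  by_cases hsome_full : ∃ j, L j = n + 1
  · obtain ⟨j, hj⟩ := hsome_full
    obtain ⟨j', hj'⟩ := hfull
    have := hL j'
    exact sum_mul_eSum_lt_eSum_tensor hy hLn (i := Fin.last n) (i' := p.succ)
      (by simp [hj]) (by simp only [Fin.val_succ]; lia) (hbot j j')
  push Not at hsome_full
  have hL' (j : Fin k) : L j = 0 ∨ L j = p + 1 := by have := hL j; have := hsome_full j; lia
  by_cases hsome_zero : ∃ j, L j = 0
  · obtain ⟨j', hj'⟩ := hsome_zero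
    obtain ⟨j, hj⟩ := hpos
    exact sum_mul_eSum_lt_eSum_tensor hy hLn (i := p.castSucc) (i' := 0)
      (by simp [(hL' j).resolve_left hj]) (by simp [hj']) (htop j j')
  · push Not at hsome_zero
    exact sum_mul_eSum_lt_eSum_tensor hy hLn (i := p.castSucc) (i' := p.succ)
      (by simp [(hL' i₀).resolve_left (hsome_zero i₀)])
      (by simp [(hL' j₀).resolve_left (hsome_zero j₀)]) hmid

theorem smaj_tensor_of_mem_splitRegion (hz : ∀ j, 0 < z j) (hy : Antitone y)
    (hyz : y ∈ splitRegion z p) (hsum : ∑ i, x i = ∑ i, y i)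
    (hsplit : eSum x (p + 1) = eSum y (p + 1))
    (hlt : ∀ m, 0 < m → m < n + 1 → m ≠ p + 1 → eSum x m < eSum y m) :
    SMaj (tensor x z) (tensor y z) := by
  refine ⟨by rw [sum_tensor, sum_tensor, hsum], fun l hl1 hl => ?_⟩
  obtain ⟨L, hLn, rfl, hle⟩ := exists_eSum_tensor_le x (fun j => (hz j).le) (Nat.le_of_succ_le hl)
  refine hle.trans_lt ?_
  have heSum : ∀ m ≤ n + 1, eSum x m ≤ eSum y m := fun m hm => by
    by_cases hm' : m = 0 ∨ m = p + 1 ∨ m = n + 1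
    · rcases hm' with rfl | rfl | rfl
      · simp
      · exact hsplit.le
      · simpa using hsum.le
    · exact (hlt m (by lia) (by lia) (by lia)).le
  have hxy : ∀ j ∈ univ, z j * eSum x (L j) ≤ z j * eSum y (L j) := fun j _ =>
    mul_le_mul_of_nonneg_left (heSum _ (hLn j)) (hz j).le
  by_cases hL : ∀ j, L j = 0 ∨ L j = p + 1 ∨ L j = n + 1
  · refine (sum_le_sum hxy).trans_lt
      (sum_mul_eSum_lt_eSum_tensor_of_mem_splitRegion hy hyz hL ?_ ?_)
    · by_contra! h
      simp [h] at hl1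
    · by_contra! h
      simp [h, mul_comm k] at hl
  · push Not at hL
    obtain ⟨j, h0, hp, hn⟩ := hL
    refine lt_of_lt_of_le ?_ (sum_mul_eSum_le_eSum_tensor y z hLn)
    exact sum_lt_sum hxy ⟨j, mem_univ j, mul_lt_mul_of_pos_left
      (hlt _ (Nat.pos_of_ne_zero h0) ((hLn j).lt_of_ne hn) hp) (hz j)⟩

end SplitRegion

section ProbabilityVectors

variable {n d : ℕ} {x y : Fin n → ℝ}

theorem convex_Vn (n : ℕ) : Convex ℝ (Vn n) := by
  rintro x ⟨hx0, hx1, hx⟩ y ⟨hy0, hy1, hy⟩ a b ha hb hab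
  refine ⟨fun i => ?_, ?_, (hx.const_mul ha).add (hy.const_mul hb)⟩
  · exact add_nonneg (mul_nonneg ha (hx0 i)) (mul_nonneg hb (hy0 i))
  · simp [sum_add_distrib, ← mul_sum, hx1, hy1, hab]

theorem inv_sum_smul_mem_Vn (hx0 : ∀ i, 0 ≤ x i) (hx : Antitone x) (hpos : 0 < ∑ i, x i) :
    (∑ i, x i)⁻¹ • x ∈ Vn n := by
  refine ⟨fun i => mul_nonneg (inv_nonneg.2 hpos.le) (hx0 i), ?_,
    hx.const_mul (inv_nonneg.2 hpos.le)⟩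
  simp only [Pi.smul_apply, smul_eq_mul, ← mul_sum, inv_mul_cancel₀ hpos.ne']

theorem single_zero_mem_Vn (n : ℕ) : (Pi.single 0 1 : Fin (n + 1) → ℝ) ∈ Vn (n + 1) := by
  have hnonneg : (0 : Fin (n + 1) → ℝ) ≤ Pi.single 0 1 := Pi.single_nonneg.2 zero_le_one
  refine ⟨hnonneg, by simp, fun i j hij => ?_⟩
  rcases eq_or_ne j 0 with rfl | hj
  · rw [Fin.le_zero_iff.1 hij]
  · rw [Pi.single_eq_of_ne hj]
    exact hnonneg i

theorem nontrivial_Vn (n : ℕ) : (Vn (n + 2)).Nontrivial := by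
  have hpos : 0 < ∑ _i : Fin (n + 2), (1 : ℝ) := sum_pos (fun _ _ => one_pos) univ_nonempty
  have hunif := inv_sum_smul_mem_Vn (fun _ => zero_le_one) antitone_const hpos
  refine ⟨_, hunif, _, single_zero_mem_Vn (n + 1), fun h => ?_⟩
  exact (mul_pos (inv_pos.2 hpos) one_pos).ne'
    ((congrFun h 1).trans (Pi.single_eq_of_ne one_ne_zero 1))

/- The witnesses lie on the segment from `x` to the vertex `(1, 0, …, 0)` of `V^(n+1)`. -/
theorem frequently_eSum_lt {x : Fin (n + 1) → ℝ} (hx : x ∈ Vn (n + 1)) (hd0 : 0 < d)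
    (hd : d ≤ n + 1) (hlt : eSum x d < 1) :
    ∃ᶠ x' in 𝓝[Vn (n + 1)] x, eSum x d < eSum x' d := by
  refine (tendsto_lineMap_nhdsGT_zero (convex_Vn _) hx (single_zero_mem_Vn n)).frequently
    (Eventually.frequently ?_)
  filter_upwards [self_mem_nhdsWithin] with t ht
  calc eSum x d < (1 - t) * eSum x d + t := by
        linarith [mul_pos (show 0 < t from ht) (sub_pos.2 hlt)]
    _ = ∑ i with Fin.val i < d, AffineMap.lineMap x (Pi.single 0 1) t i := by
      rw [eSum_eq_sum_filter_lt hx.2.2 hd]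
      simp [AffineMap.lineMap_apply_module, sum_add_distrib, mul_sum, Pi.single_apply, hd0]
    _ ≤ eSum (AffineMap.lineMap x (Pi.single 0 1) t) d := sum_filter_lt_le_eSum _ hd

theorem eSum_nonneg (hy : ∀ i, 0 ≤ y i) (hd : d ≤ n) : 0 ≤ eSum y d := by
  obtain ⟨s, -, he⟩ := exists_eSum_eq_sum y hd
  exact he ▸ sum_nonneg fun i _ => hy i

theorem antitone_yvec (hy : y ∈ Vn n) (hd0 : 0 < d) (hd : d < n) : Antitone (yvec y d) := by
  have hd0' : (0 : ℝ) < d := by exact_mod_cast hd0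
  have hd' : (0 : ℝ) < n - d := sub_pos.2 (by exact_mod_cast hd)
  let m : Fin n := ⟨d, hd⟩
  have hhead : y m ≤ eSum y d / d := by
    have h := card_nsmul_le_sum {i : Fin n | (i : ℕ) < d} y (y m) fun i hi =>
      hy.2.2 (Fin.le_def.2 (mem_filter_univ i |>.1 hi).le)
    rw [Fin.card_filter_val_lt, min_eq_right hd.le, ← eSum_eq_sum_filter_lt hy.2.2 hd.le,
      nsmul_eq_mul] at h
    exact (le_div_iff₀' hd0').2 h
  have htail : (1 - eSum y d) / (n - d) ≤ y m := by
    have h := sum_le_card_nsmul {i : Fin n | d ≤ (i : ℕ) ∧ (i : ℕ) < n} y (y m) fun i hi =>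
      hy.2.2 (Fin.le_def.2 (mem_filter_univ i |>.1 hi).1)
    have hsum := eSum_add_sum_filter hy.2.2 hd.le le_rfl
    rw [eSum_self, hy.2.1] at hsum
    rw [card_filter_le_and_lt le_rfl, nsmul_eq_mul, Nat.cast_sub hd.le] at h
    exact (div_le_iff₀' hd').2 (by linarith)
  intro i j hij
  rw [Fin.le_def] at hij
  simp only [yvec]
  split_ifs <;> first | lia | linarith

theorem eSum_yvec (hy : y ∈ Vn n) (hd0 : 0 < d) (hd : d < n) :
    eSum (yvec y d) d = eSum y d := by
  have hd0' : (d : ℝ) ≠ 0 := by exact_mod_cast hd0.ne'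
  rw [← eSum_add_mul_const (antitone_yvec hy hd0 hd) d.zero_le hd.le (c := eSum y d / d)
    fun i _ hi => if_pos hi]
  simp [mul_div_cancel₀ _ hd0']

theorem yvec_mem_Vn (hy : y ∈ Vn n) (hd0 : 0 < d) (hd : d < n) : yvec y d ∈ Vn n := by
  have hanti := antitone_yvec hy hd0 hd
  have hd' : (0 : ℝ) < n - d := sub_pos.2 (by exact_mod_cast hd)
  have hsum : ∑ i, yvec y d i = 1 := by
    rw [← eSum_self, ← eSum_add_mul_const hanti hd.le le_rfl (c := (1 - eSum y d) / (n - d))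
      fun i hi _ => if_neg hi.not_gt, eSum_yvec hy hd0 hd, mul_div_cancel₀ _ hd'.ne']
    ring
  have hle : eSum y d ≤ 1 := by
    have h := eSum_add_sum_filter hy.2.2 hd.le le_rfl
    rw [eSum_self, hy.2.1] at h
    linarith [sum_nonneg fun i (_ : i ∈ ({i | d ≤ i ∧ i < n} : Finset (Fin n))) => hy.1 i]
  refine ⟨fun i => ?_, hsum, hanti⟩
  unfold yvec
  split_ifs
  · exact div_nonneg (eSum_nonneg hy.1 hd.le) d.cast_nonneg
  · exact div_nonneg (sub_nonneg.2 hle) hd'.le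

end ProbabilityVectors

section Catalysis

variable {n k : ℕ} {z : Fin k → ℝ} {p : Fin n}

theorem smaj_tensor_yvec {y : Fin (n + 1) → ℝ} (hz : ∀ j, 0 < z j) (hy : y ∈ Vn (n + 1))
    (hyz : y ∈ splitRegion z p) : SMaj (tensor (yvec y (p + 1)) z) (tensor y z) := by
  have hp : (p : ℕ) + 1 < n + 1 := by lia
  have hx := yvec_mem_Vn hy p.val.succ_pos hp
  have hsum : ∑ i, yvec y (p + 1) i = ∑ i, y i := hx.2.1.trans hy.2.1.symm
  have hsplit := eSum_yvec hy p.val.succ_pos hp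
  refine smaj_tensor_of_mem_splitRegion hz hy.2.2 hyz hsum hsplit fun m hm0 hmn hmp => ?_
  rcases hmp.lt_or_gt with hlt | hgt
  · exact eSum_lt_eSum_of_const_block hx.2.2 hy.2.2 (i := 0) (j := p.castSucc)
      hm0 (Nat.lt_succ_iff.1 hlt) (fun l _ hl => if_pos (Nat.lt_succ_iff.2 hl))
      (by simp) hsplit (apply_castSucc_lt_apply_zero hz hyz)
  · exact eSum_lt_eSum_of_const_block hx.2.2 hy.2.2 (i := p.succ) (j := Fin.last n)
      hgt (Nat.lt_succ_iff.1 hmn) (fun l hl _ => if_neg (not_lt.2 hl))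
      hsplit (by simpa using hsum) (apply_last_lt_apply_succ hz hyz)

theorem Sset_ssubset_Tcat {y : Fin (n + 1) → ℝ} (hz : ∀ j, 0 < z j) (hy : y ∈ Vn (n + 1))
    (hyz : y ∈ splitRegion z p) : Sset y ⊂ Tcat y z := by
  have hp : (p : ℕ) + 1 < n + 1 := by lia
  have hx := yvec_mem_Vn hy p.val.succ_pos hp
  have hlt_one : eSum (yvec y (p + 1)) (p + 1) < 1 := by
    have h := eSum_add_sum_filter hy.2.2 hp.le le_rfl
    have hpos : 0 < y p.succ :=
      (hy.1 _).trans_lt (apply_last_lt_apply_succ hz hyz)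
    have hle := single_le_sum (f := y) (s := {i | (p : ℕ) + 1 ≤ i ∧ (i : ℕ) < n + 1})
      (fun i _ => hy.1 i) (a := p.succ) (by simp)
    rw [eSum_self, hy.2.1] at h
    rw [eSum_yvec hy p.val.succ_pos hp]
    linarith
  have hnear : ∀ᶠ x in 𝓝[Vn (n + 1)] yvec y (p + 1),
      x ∈ Vn (n + 1) ∧ SMaj (tensor x z) (tensor y z) := by
    have h := (continuous_tensor_left z).continuousAt.eventually
      (smaj_tensor_yvec hz hy hyz).eventually_nhds
    filter_upwards [self_mem_nhdsWithin, nhdsWithin_le_nhds h] with x hxV hxz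
    exact ⟨hxV, hxz (by rw [sum_tensor, sum_tensor, hxV.2.1, hx.2.1])⟩
  obtain ⟨x, hlt, hxV, hxz⟩ :=
    ((frequently_eSum_lt hx p.val.succ_pos hp.le hlt_one).and_eventually hnear).exists
  have hsub : Sset y ⊆ Tcat y z := fun w hw => ⟨hw.1, hw.2.tensor_right fun j => (hz j).le⟩
  refine (Set.ssubset_iff_of_subset hsub).2 ⟨x, ⟨hxV, hxz.maj⟩, fun hxS => ?_⟩
  rw [eSum_yvec hy p.val.succ_pos hp] at hlt
  exact hlt.not_ge (hxS.2.2 _ p.val.succ_pos hp.le)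

theorem exists_forall_lt_mul (hz : ∀ j, 0 < z j) : ∃ r : ℝ, ∀ i j, z i < r * z j := by
  obtain ⟨C, hC⟩ := (Set.finite_range fun q : Fin k × Fin k => z q.1 / z q.2).bddAbove
  refine ⟨C + 1, fun i j => (div_lt_iff₀ (hz j)).1 ?_⟩
  exact (hC ⟨(i, j), rfl⟩).trans_lt (lt_add_one C)

/- The witness is `(r, 1, …, 1, 0)`, normalised, with `r` large. -/
theorem nonempty_Vn_inter_splitRegion (hz : ∀ j, 0 < z j) (hnonunif : ∃ i j, z i < z j)
    (hp0 : 0 < (p : ℕ)) (hpn : (p : ℕ) + 1 < n) :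
    (Vn (n + 1) ∩ splitRegion z p).Nonempty := by
  obtain ⟨r, hr⟩ := exists_forall_lt_mul hz
  obtain ⟨i₀, j₀, hlt⟩ := hnonunif
  have hr1 : 1 < r := lt_of_mul_lt_mul_right (by simpa using hr i₀ i₀) (hz i₀).le
  let v : Fin (n + 1) → ℝ := fun i => if (i : ℕ) = 0 then r else if (i : ℕ) < n then 1 else 0
  have hv0 (i) : 0 ≤ v i := by
    simp only [v]
    split_ifs <;> linarith
  have hanti : Antitone v := fun i j hij => by
    rw [Fin.le_def] at hij
    simp only [v]
    split_ifs <;> first | lia | linarith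
  have hvpos : 0 < ∑ i, v i :=
    sum_pos' (fun i _ => hv0 i) ⟨0, mem_univ _, by simp only [v, Fin.val_zero, if_pos]; linarith⟩
  have hvz : v ∈ splitRegion z p := by
    have hzero : v 0 = r := if_pos rfl
    have hlast : v (Fin.last n) = 0 := by simp [v, (hp0.trans p.isLt).ne']
    have hcast : v p.castSucc = 1 := (if_neg hp0.ne').trans (if_pos p.isLt)
    have hsucc : v p.succ = 1 := by simp [v, hpn]
    simp only [splitRegion, Set.mem_ofPred_eq, hzero, hlast, hcast, hsucc, one_mul, zero_mul]
    exact ⟨hr, fun _ j => hz j, i₀, j₀, hlt⟩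
  exact ⟨_, inv_sum_smul_mem_Vn hv0 hanti hvpos, smul_mem_splitRegion hvz (inv_pos.2 hvpos)⟩

end Catalysis

theorem stmt4_general {k n : ℕ} (hn : 4 ≤ n) {z : Fin k → ℝ} (hzpos : ∀ i, 0 < z i)
    (hnonunif : ∃ i j, z i < z j) :
    (∃ U : Set (Fin n → ℝ), IsOpen U ∧ (Vn n ∩ U).Nonempty ∧
      Vn n ∩ U ⊆ {y | Sset y ⊂ Tcat y z}) ∧
    ¬ {y : Fin n → ℝ | y ∈ Vn n ∧ Sset y ⊂ Tcat y z}.Countable := by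
  obtain ⟨m, rfl⟩ := Nat.exists_eq_add_of_le' hn
  let U : Set (Fin (m + 4) → ℝ) := splitRegion z (1 : Fin (m + 3))
  have hU : IsOpen U := isOpen_splitRegion z 1
  have hne : (Vn (m + 4) ∩ U).Nonempty :=
    nonempty_Vn_inter_splitRegion hzpos hnonunif (by simp) (by simp)
  have hsub : ∀ y ∈ Vn (m + 4) ∩ U, Sset y ⊂ Tcat y z := fun y hy =>
    Sset_ssubset_Tcat hzpos hy.1 hy.2
  have hsub' : Vn (m + 4) ∩ U ⊆ {y | y ∈ Vn (m + 4) ∧ Sset y ⊂ Tcat y z} := fun y hy =>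
    ⟨hy.1, hsub y hy⟩
  exact ⟨⟨U, hU, hne, hsub⟩, fun hcount =>
    not_countable_inter_of_convex (convex_Vn _) (nontrivial_Vn (m + 2)) hU hne (hcount.mono hsub')⟩

/-- Theorem 5 of the paper. For any nonuniform probability
vector `z` and `n ≥ 4`, the set `A(z) = {y ∈ Vⁿ : S(y) ⊊ T(y,z)}` contains a
nonempty relatively open subset of `Vⁿ`; in particular it is uncountable. -/
theorem stmt4 {k n : ℕ} (hk : 0 < k) (hn : 4 ≤ n)
    (z : Fin k → ℝ) (hz : z ∈ Vn k) (hzpos : ∀ i, 0 < z i)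
    (hnonunif : z ⟨0, hk⟩ > z ⟨k - 1, by omega⟩) :
    (∃ U : Set (Fin n → ℝ), IsOpen U ∧ (Vn n ∩ U).Nonempty ∧
      Vn n ∩ U ⊆ {y | Sset y ⊂ Tcat y z}) ∧
    ¬ {y : Fin n → ℝ | y ∈ Vn n ∧ Sset y ⊂ Tcat y z}.Countable := by
  exact stmt4_general hn hzpos ⟨_, _, hnonunif⟩

end
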